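/- Fix integers s, k ≥ 2 and u ≥ s+1, and let n = (u+s-1)(k-1) + s + k. Then any family G of k-element subsets of [n] with matching number ν(G) = s and covering number τ(G) ≥ s+1 satisfies |G| ≤ C(n, k) - C(n-s, k) - ((u-s-1)/u)·C(n-s-k, k-1). -/

import Mathlib

/-!
Write `l = k - 1` and `u = s + 1 + d`. Compressions preserve the size of `G` and create no
`s + 1` disjoint members, so `G` may be assumed shifted, either on the whole ground set or, when `G`
has a cover `T` of size `s + 1`, on the complement of such a `T`; in the former case let `T` consist
of the `s + 1` smallest elements. The members of `G` with trace `{i}` on `T`, for `i ∈ T`, yield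
`s + 1` cross-dependent families of `l`-subsets of `Tᶜ`, where `#Tᶜ = (u + s) * l`, and by
shiftedness these families have a common member `B`.

Average over the partitions of `Tᶜ` into `u + s` blocks of size `l`: by Hall's theorem, `s + 1`
cross-dependent families cannot all be matched to distinct blocks, which bounds the number of
incidences between blocks and families; for partitions using `B` as a block the bound improves.
The members of `G` disjoint from `T` are controlled by Frankl's inequality `#F ≤ s * #(∂ F)` for
families with matching number at most `s`, since their shadow lies in all `s + 1` families.
Members of `G` meeting `T` in at least two points are bounded trivially.
-/

open Finset Function
open scoped FinsetFamily Pointwise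

section Averaging

theorem card_nsmul_sum_smul {G Y M : Type*} [Group G] [Fintype G] [Fintype Y] [MulAction G Y]
    [MulAction.IsPretransitive G Y] [AddCommMonoid M] (f : Y → M) (y : Y) :
    Fintype.card Y • ∑ g : G, f (g • y) = Fintype.card G • ∑ z, f z := by
  have horbit (z : Y) : ∑ g : G, f (g • z) = ∑ g : G, f (g • y) := by
    obtain ⟨h, rfl⟩ := MulAction.exists_smul_eq G y z
    exact Fintype.sum_equiv (Equiv.mulRight h) _ _ fun g => by simp [mul_smul]
  calc Fintype.card Y • ∑ g : G, f (g • y) = ∑ z, ∑ g : G, f (g • z) := by simp [horbit]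
    _ = ∑ g : G, ∑ z, f (g • z) := sum_comm
    _ = ∑ _g : G, ∑ z, f z := sum_congr rfl fun g _ => Equiv.sum_comp (MulAction.toPerm g) f
    _ = Fintype.card G • ∑ z, f z := by simp

theorem exists_pairwise_disjoint_card_eq {β κ : Type*} [Fintype β] [Fintype κ]
    {l : ℕ} (hβ : Fintype.card β = Fintype.card κ * l) :
    ∃ P : κ → Finset β, (∀ t, #(P t) = l) ∧ Pairwise (Disjoint on P) := by
  classical
  let e : κ × Fin l ≃ β := Fintype.equivOfCardEq (by simp [hβ])
  refine ⟨fun t => ({t} ×ˢ univ).map e.toEmbedding, by simp, fun a b hab => ?_⟩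
  exact (disjoint_map _).2 (disjoint_product.2 (.inl (by simpa using hab)))

theorem sum_powersetCard_univ_le {β κ R : Type*} [Fintype β] [Fintype κ] [Nonempty κ]
    [CommSemiring R] [LinearOrder R] [IsStrictOrderedRing R] {l : ℕ}
    (hβ : Fintype.card β = Fintype.card κ * l) {f : Finset β → R} {M : R}
    (h : ∀ P : κ → Finset β, (∀ t, #(P t) = l) → Pairwise (Disjoint on P) →
      ∑ t, f (P t) ≤ Fintype.card κ * M) :
    ∑ A ∈ powersetCard l univ, f A ≤ (Fintype.card β).choose l * M := by
  classical
  obtain ⟨P, hPcard, hPdisj⟩ := exists_pairwise_disjoint_card_eq hβ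
  let Y := Set.powersetCard β l
  let Q (t : κ) : Y := ⟨P t, hPcard t⟩
  have : MulAction.IsPretransitive (Equiv.Perm β) Y := Set.powersetCard.isPretransitive
  have hsum : ∑ A ∈ powersetCard l univ, f A = ∑ A : Y, f A :=
    sum_subtype _ (by simp) f
  have hY : Fintype.card Y = (Fintype.card β).choose l := by
    rw [← Nat.card_eq_fintype_card, Set.powersetCard.card, Nat.card_eq_fintype_card]
  have hle (σ : Equiv.Perm β) : ∑ t, f ((σ • Q t : Y)) ≤ Fintype.card κ * M :=
    h (fun t => (σ • Q t : Y)) (fun t => (σ • Q t).2) fun a b hab =>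
      (disjoint_image (MulAction.injective σ)).2 (hPdisj hab)
  rw [hsum, ← hY]
  set c := Fintype.card κ * Fintype.card (Equiv.Perm β)
  have hc : 0 < (c : R) := by
    exact_mod_cast Nat.mul_pos Fintype.card_pos Fintype.card_pos
  refine le_of_mul_le_mul_left ?_ hc
  calc (c : R) * ∑ A : Y, f A
      = ∑ _t : κ, Fintype.card (Equiv.Perm β) • ∑ A : Y, f A := by
        simp [c, mul_assoc]
    _ = ∑ t, Fintype.card Y • ∑ σ : Equiv.Perm β, f ((σ • Q t : Y)) :=
        sum_congr rfl fun t _ =>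
          (card_nsmul_sum_smul (G := Equiv.Perm β) (fun A : Y => f A) (Q t)).symm
    _ = Fintype.card Y • ∑ σ : Equiv.Perm β, ∑ t, f ((σ • Q t : Y)) := by
        rw [← smul_sum, sum_comm]
    _ ≤ Fintype.card Y • ∑ _σ : Equiv.Perm β, (Fintype.card κ * M) :=
        nsmul_le_nsmul_right (sum_le_sum fun σ _ => hle σ) _
    _ = c * (Fintype.card Y * M) := by
        simp only [sum_const, card_univ, nsmul_eq_mul, c, Nat.cast_mul]
        ring

theorem sum_powersetCard_le {α κ R : Type*} [Fintype κ] [Nonempty κ]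
    [CommSemiring R] [LinearOrder R] [IsStrictOrderedRing R] {X : Finset α} {l : ℕ}
    (hX : #X = Fintype.card κ * l) {f : Finset α → R} {M : R}
    (h : ∀ P : κ → Finset α, (∀ t, P t ∈ powersetCard l X) → Pairwise (Disjoint on P) →
      ∑ t, f (P t) ≤ Fintype.card κ * M) :
    ∑ A ∈ powersetCard l X, f A ≤ (#X).choose l * M := by
  classical
  let j : X ↪ α := Embedding.subtype _
  have hj : univ.map j = X := attach_map_val
  have hle := sum_powersetCard_univ_le (β := X) (by simpa using hX) (f := fun A => f (A.map j))
    (M := M) fun P hP hdisj => h (fun t => (P t).map j)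
      (fun t => mem_powersetCard.2 ⟨fun _ => property_of_mem_map_subtype _, by simp [hP]⟩)
      fun a b hab => (disjoint_map _).2 (hdisj hab)
  rw [Fintype.card_coe] at hle
  calc ∑ A ∈ powersetCard l X, f A = ∑ A ∈ powersetCard l (univ.map j), f A := by rw [hj]
    _ = ∑ A ∈ powersetCard l univ, f (A.map j) := by rw [powersetCard_map, sum_map]; rfl
    _ ≤ (#X).choose l * M := hle

end Averaging

section CrossDependent

/-- The families `F i` are cross-dependent if one cannot choose pairwise disjoint sets, one from
each of them. The matching number of a family of nonempty sets is at most `s` exactly when `s + 1`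
copies of the family are cross-dependent. -/
def CrossDependent {α ι : Type*} (F : ι → Finset (Finset α)) : Prop :=
  ∀ f : ι → Finset α, (∀ i, f i ∈ F i) → ¬ Pairwise (Disjoint on f)

variable {α ι κ : Type*} {F : ι → Finset (Finset α)} [DecidableEq α] [Fintype κ]

theorem CrossDependent.exists_card_lt (hF : CrossDependent F) {P : κ → Finset α}
    (hP : Pairwise (Disjoint on P)) :
    ∃ I : Finset ι, #{t | ∃ i ∈ I, P t ∈ F i} < #I := by
  by_contra! hall
  obtain ⟨g, hg, hgF⟩ :=
    (Fintype.all_card_le_filter_rel_iff_exists_injective fun i t => P t ∈ F i).1 hall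
  exact hF (P ∘ g) hgF (hP.comp_of_injective hg)

variable [Fintype ι] {X B : Finset α} {s l d N : ℕ}

/-- The number of families `F i` that contain `A`, the quantity that is averaged over the blocks
of a partition. -/
def memberCount (F : ι → Finset (Finset α)) (A : Finset α) : ℕ :=
  #{i | A ∈ F i}

theorem memberCount_le_add_ite (hι : Fintype.card ι = s + 1) (A : Finset α) :
    memberCount F A ≤ s + if ∀ i, A ∈ F i then 1 else 0 := by
  split_ifs with hA
  · exact (card_le_univ _).trans hι.le
  · obtain ⟨i, hi⟩ := not_forall.1 hA
    exact Nat.le_of_lt_succ ((card_lt_univ_of_notMem (x := i) (by simpa using hi)).trans_eq hι)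

theorem memberCount_le_ite_add (I : Finset ι) (A : Finset α) [DecidableEq ι] :
    memberCount F A ≤ (if ∃ i ∈ I, A ∈ F i then #I else 0) + #Iᶜ := by
  split_ifs with hA
  · exact (card_le_univ _).trans (card_add_card_compl I).ge
  · rw [zero_add]
    exact card_le_card fun i hi => mem_compl.2 fun hiI => hA ⟨i, hiI, by simpa using hi⟩

theorem sum_memberCount {𝒮 : Finset (Finset α)} (hF : ∀ i, F i ⊆ 𝒮) :
    ∑ A ∈ 𝒮, memberCount F A = ∑ i, #(F i) := by
  calc ∑ A ∈ 𝒮, memberCount F A = ∑ i, #{A ∈ 𝒮 | A ∈ F i} :=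
        sum_card_bipartiteAbove_eq_sum_card_bipartiteBelow fun A i => A ∈ F i
    _ = ∑ i, #(F i) := sum_congr rfl fun i _ => by
        rw [filter_mem_eq_inter, inter_eq_right.2 (hF i)]

theorem sum_memberCount_comp_le (I : Finset ι) (P : κ → Finset α) :
    ∑ t, memberCount F (P t) ≤
      #{t | ∃ i ∈ I, P t ∈ F i} * #I + (Fintype.card ι - #I) * Fintype.card κ := by
  classical
  calc ∑ t, memberCount F (P t)
      ≤ ∑ t, ((if ∃ i ∈ I, P t ∈ F i then #I else 0) + #Iᶜ) :=
        sum_le_sum fun t _ => memberCount_le_ite_add I (P t)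
    _ = _ := by
        rw [sum_add_distrib, ← sum_filter, sum_const, sum_const, card_univ, card_compl,
          smul_eq_mul, smul_eq_mul, mul_comm (Fintype.card κ)]

theorem CrossDependent.sum_memberCount_add_le (hF : CrossDependent F)
    (hι : Fintype.card ι = s + 1) (hX : #X = (s + 1 + d) * l) :
    ∑ A ∈ powersetCard l X, (memberCount F A + d * if ∀ i, A ∈ F i then 1 else 0) ≤
      (#X).choose l * s := by
  refine sum_powersetCard_le (κ := Fin (s + 1 + d)) (by simpa using hX) fun P _ hP => ?_
  obtain ⟨I, hI⟩ := hF.exists_card_lt hP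
  have hcount := sum_memberCount_comp_le (F := F) I P
  have hall : #{t | ∀ i, P t ∈ F i} ≤ #{t | ∃ i ∈ I, P t ∈ F i} := by
    obtain ⟨i, hi⟩ := card_pos.1 (Nat.zero_lt_of_lt hI)
    exact card_le_card (monotone_filter_right _ fun t _ ht => ⟨i, hi, ht i⟩)
  obtain ⟨c, hc⟩ := Nat.exists_eq_add_of_le ((card_le_univ I).trans_eq hι)
  have hcompl : s + 1 - #I = c := by lia
  rw [hι, Fintype.card_fin, hcompl] at hcount
  rw [sum_add_distrib, ← mul_sum, sum_boole, Nat.cast_id, Fintype.card_fin]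
  nlinarith

theorem CrossDependent.sum_memberCount_add_one_le (hF : CrossDependent F)
    (hι : Fintype.card ι = s + 1) (hN : s < N) (hX : #X = N * l) (hXB : Disjoint X B)
    (hB : ∀ i, B ∈ F i) :
    ∑ A ∈ powersetCard l X, (memberCount F A + 1) ≤ (#X).choose l * s := by
  have : NeZero N := ⟨by lia⟩
  refine sum_powersetCard_le (κ := Fin N) (by simpa using hX) fun P hPX hP => ?_
  let Q (o : Option (Fin N)) : Finset α := o.elim B P
  have hPB (t : Fin N) : Disjoint (P t) B := hXB.mono_left (mem_powersetCard.1 (hPX t)).1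
  have hQ : Pairwise (Disjoint on Q) := by
    rintro (_ | a) (_ | b) hab
    exacts [absurd rfl hab, (hPB b).symm, hPB a, hP (by simpa using hab)]
  obtain ⟨I, hI⟩ := hF.exists_card_lt hQ
  have hcount := sum_memberCount_comp_le (F := F) I P
  have hlt : #{t | ∃ i ∈ I, P t ∈ F i} + 1 < #I := by
    obtain ⟨i, hi⟩ := card_pos.1 (Nat.zero_lt_of_lt hI)
    rw [← card_insertNone]
    refine (card_le_card fun o ho => ?_).trans_lt hI
    cases o with
    | none => simpa [Q] using ⟨i, hi, hB i⟩
    | some t => simpa [Q] using ho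
  obtain ⟨c, hc⟩ := Nat.exists_eq_add_of_le ((card_le_univ I).trans_eq hι)
  have hcompl : s + 1 - #I = c := by lia
  rw [hι, Fintype.card_fin, hcompl] at hcount
  rw [sum_add_distrib, sum_const, card_univ, Fintype.card_fin, smul_eq_mul, mul_one]
  nlinarith

theorem CrossDependent.sum_memberCount_add_choose_le (hF : CrossDependent F)
    (hι : Fintype.card ι = s + 1) (hN : s < N) (hX : #X = (N + 1) * l)
    (hBX : B ∈ powersetCard l X) (hB : ∀ i, B ∈ F i) :
    ∑ A ∈ powersetCard l X, memberCount F A + (N * l).choose l ≤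
      (#X).choose l * s + #{A ∈ powersetCard l X | ∀ i, A ∈ F i} := by
  obtain ⟨hBX, hBl⟩ := mem_powersetCard.1 hBX
  have hcard : #(X \ B) = N * l := by
    rw [card_sdiff_of_subset hBX, hX, hBl, add_one_mul, Nat.add_sub_cancel]
  have hsub : powersetCard l (X \ B) ⊆ powersetCard l X := powersetCard_mono sdiff_subset
  have hin := hF.sum_memberCount_add_one_le hι hN hcard sdiff_disjoint hB
  rw [sum_add_distrib, sum_const, smul_eq_mul, mul_one, card_powersetCard, hcard] at hin
  have hout : ∑ A ∈ powersetCard l X \ powersetCard l (X \ B), memberCount F A ≤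
      #(powersetCard l X \ powersetCard l (X \ B)) * s +
        #{A ∈ powersetCard l X | ∀ i, A ∈ F i} := by
    calc _ ≤ ∑ A ∈ powersetCard l X \ powersetCard l (X \ B),
          (s + if ∀ i, A ∈ F i then 1 else 0) :=
          sum_le_sum fun A _ => memberCount_le_add_ite hι A
      _ ≤ _ := by
          rw [sum_add_distrib, sum_const, smul_eq_mul, sum_boole, Nat.cast_id]
          gcongr
          exact sdiff_subset
  have hchoose := card_sdiff_add_card_eq_card hsub
  rw [card_powersetCard, card_powersetCard, hcard] at hchoose
  rw [← sum_sdiff hsub, ← hchoose, add_mul]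
  lia

theorem CrossDependent.mul_sum_card_add_le (hF : CrossDependent F)
    (hι : Fintype.card ι = s + 1) (hX : #X = (2 * s + 1 + d) * l)
    (hFX : ∀ i, F i ⊆ powersetCard l X) (hB : ∀ i, B ∈ F i) :
    (s + 1 + d) * (∑ i, #(F i) + s * #{A ∈ powersetCard l X | ∀ i, A ∈ F i}) +
      d * ((2 * s + d) * l).choose l ≤ (s + 1 + d) * ((#X).choose l * s) := by
  have : Nonempty ι := Fintype.card_pos_iff.1 (by lia)
  have hs : 0 < s := by
    by_contra! hs
    have : Subsingleton ι := Fintype.card_le_one_iff_subsingleton.1 (by lia)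
    exact hF (fun _ => B) hB Subsingleton.pairwise
  have hBX : B ∈ powersetCard l X := hFX (Classical.arbitrary ι) (hB _)
  have hpart := hF.sum_memberCount_add_le hι (d := s + d) (l := l) (by rw [hX]; ring)
  have hstar := hF.sum_memberCount_add_choose_le hι (N := 2 * s + d) (by lia)
    (by rw [hX]; ring) hBX hB
  rw [sum_add_distrib, ← mul_sum, sum_boole, Nat.cast_id, sum_memberCount hFX] at hpart
  rw [sum_memberCount hFX] at hstar
  linear_combination (s + 1) * hpart + d * hstar

end CrossDependent

section Subfamily

variable {α : Type*} {F : Finset (Finset α)} {X Y : Finset α} {a : α} {k s : ℕ}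

theorem CrossDependent.eq_empty_of_subset_powersetCard_zero
    (hν : CrossDependent fun _ : Fin (s + 1) => F) (hFX : F ⊆ powersetCard 0 X) : F = ∅ := by
  refine eq_empty_of_forall_notMem fun A hA => hν (fun _ => A) (fun _ => hA) fun _ _ _ => ?_
  obtain rfl : A = ∅ := by simpa using hFX hA
  exact disjoint_bot_left

variable [DecidableEq α]

theorem nonMemberSubfamily_subset_powersetCard (hF : F ⊆ powersetCard k (insert a Y)) :
    F.nonMemberSubfamily a ⊆ powersetCard k Y := fun A hA => by
  obtain ⟨hAF, haA⟩ := mem_nonMemberSubfamily.1 hA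
  obtain ⟨hAY, hAk⟩ := mem_powersetCard.1 (hF hAF)
  exact mem_powersetCard.2 ⟨(subset_insert_iff_of_notMem haA).1 hAY, hAk⟩

theorem memberSubfamily_subset_powersetCard (hF : F ⊆ powersetCard (k + 1) (insert a Y)) :
    F.memberSubfamily a ⊆ powersetCard k Y := fun A hA => by
  obtain ⟨hAF, haA⟩ := mem_memberSubfamily.1 hA
  obtain ⟨hAY, hAk⟩ := mem_powersetCard.1 (hF hAF)
  exact mem_powersetCard.2 ⟨(insert_subset_insert_iff haA).1 hAY,
    Nat.succ_injective ((card_insert_of_notMem haA).symm.trans hAk)⟩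

theorem shadow_nonMemberSubfamily_subset :
    ∂ (F.nonMemberSubfamily a) ⊆ (∂ F).nonMemberSubfamily a := fun B hB => by
  obtain ⟨A, hA, x, hx, rfl⟩ := mem_shadow_iff.1 hB
  obtain ⟨hAF, haA⟩ := mem_nonMemberSubfamily.1 hA
  exact mem_nonMemberSubfamily.2 ⟨erase_mem_shadow hAF hx, fun h => haA (mem_of_mem_erase h)⟩

theorem shadow_memberSubfamily_subset :
    ∂ (F.memberSubfamily a) ⊆ (∂ F).memberSubfamily a := fun B hB => by
  obtain ⟨A, hA, x, hx, rfl⟩ := mem_shadow_iff.1 hB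
  obtain ⟨hAF, haA⟩ := mem_memberSubfamily.1 hA
  refine mem_memberSubfamily.2 ⟨?_, fun h => haA (mem_of_mem_erase h)⟩
  rw [← erase_insert_of_ne (ne_of_mem_of_not_mem hx haA).symm]
  exact erase_mem_shadow hAF (mem_insert_of_mem hx)

theorem card_mul_le_card_shadow_mul_of_subset_powersetCard (hF : F ⊆ powersetCard (k + 1) X) :
    #F * (k + 1) ≤ #(∂ F) * (#X - k) := by
  have hcard {A : Finset α} (hA : A ∈ F) : A ⊆ X ∧ #A = k + 1 := mem_powersetCard.1 (hF hA)
  refine card_mul_le_card_mul (fun A B => B ⊆ A) (fun A hA => ?_) (fun B hB => ?_)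
  · rw [← (hcard hA).2, ← card_image_of_injOn A.erase_injOn]
    refine card_le_card (image_subset_iff.2 fun a ha => ?_)
    exact (mem_bipartiteAbove _).2 ⟨erase_mem_shadow hA ha, erase_subset _ _⟩
  · obtain ⟨A, hA, x, hx, rfl⟩ := mem_shadow_iff.1 hB
    have hBk : #(A.erase x) = k := by rw [card_erase_of_mem hx, (hcard hA).2, Nat.add_sub_cancel]
    have hBX : A.erase x ⊆ X := (erase_subset _ _).trans (hcard hA).1
    rw [← hBk, ← card_sdiff_of_subset hBX]
    refine (card_le_card fun C hC => ?_).trans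
      (card_image_le (s := X \ A.erase x) (f := (insert · (A.erase x))))
    obtain ⟨hCF, hBC⟩ := (mem_bipartiteBelow _).1 hC
    obtain ⟨y, hy, rfl⟩ := exists_eq_insert_iff.2 ⟨hBC, by rw [hBk, (hcard hCF).2]⟩
    exact mem_image_of_mem _ (mem_sdiff.2 ⟨(hcard hCF).1 (mem_insert_self _ _), hy⟩)

theorem card_le_mul_card_shadow_of_card_lt (hF : F ⊆ powersetCard k X) (hX : #X < (s + 1) * k) :
    #F ≤ s * #(∂ F) := by
  obtain _ | k := k
  · simp at hX
  have hle : #X - k ≤ s * (k + 1) := by lia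
  refine Nat.le_of_mul_le_mul_right (c := k + 1) ?_ k.succ_pos
  calc #F * (k + 1) ≤ #(∂ F) * (#X - k) := card_mul_le_card_shadow_mul_of_subset_powersetCard hF
    _ ≤ #(∂ F) * (s * (k + 1)) := by gcongr
    _ = s * #(∂ F) * (k + 1) := by ring

end Subfamily

section Shifted

variable {α : Type*} [LinearOrder α] {F : Finset (Finset α)} {X Y : Finset α} {a : α} {k s : ℕ}

/-- `F` is shifted on `X`: it contains every set obtained from one of its members by replacing an
element of `X` by a smaller element of `X`. -/
def IsShiftedOn (X : Finset α) (F : Finset (Finset α)) : Prop :=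
  ∀ A ∈ F, ∀ x ∈ X, ∀ y ∈ X, x < y → y ∈ A → x ∉ A → insert x (A.erase y) ∈ F

theorem IsShiftedOn.mono (hF : IsShiftedOn X F) (hYX : Y ⊆ X) : IsShiftedOn Y F :=
  fun A hA x hx y hy => hF A hA x (hYX hx) y (hYX hy)

theorem IsShiftedOn.nonMemberSubfamily (hF : IsShiftedOn (insert a Y) F) (ha : a ∉ Y) :
    IsShiftedOn Y (F.nonMemberSubfamily a) := fun A hA x hx y hy hxy hyA hxA => by
  obtain ⟨hAF, haA⟩ := mem_nonMemberSubfamily.1 hA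
  have := hF A hAF x (mem_insert_of_mem hx) y (mem_insert_of_mem hy) hxy hyA hxA
  exact mem_nonMemberSubfamily.2 ⟨this, by grind⟩

theorem IsShiftedOn.memberSubfamily (hF : IsShiftedOn X F) (ha : a ∉ Y) (hYX : Y ⊆ X) :
    IsShiftedOn Y (F.memberSubfamily a) := fun A hA x hx y hy hxy hyA hxA => by
  obtain ⟨hAF, haA⟩ := mem_memberSubfamily.1 hA
  have := hF (insert a A) hAF x (hYX hx) y (hYX hy) hxy
    (mem_insert_of_mem hyA) (by grind)
  rw [erase_insert_of_ne (by grind), insert_comm] at this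
  exact mem_memberSubfamily.2 ⟨this, by grind⟩

/-- The `s + 1` members of a matching of the link of `a` are completed by distinct elements
outside their union, which shiftedness allows because `a` is the largest element. -/
theorem CrossDependent.memberSubfamily (hν : CrossDependent fun _ : Fin (s + 1) => F)
    (hF : IsShiftedOn (insert a Y) F) (hFX : F ⊆ powersetCard (k + 1) (insert a Y))
    (haY : ∀ y ∈ Y, y < a) (hX : (s + 1) * (k + 1) ≤ #(insert a Y)) :
    CrossDependent fun _ : Fin (s + 1) => F.memberSubfamily a := fun f hf hdisj => by
  have hfk (i) : #(f i) = k :=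
    (mem_powersetCard.1 (memberSubfamily_subset_powersetCard hFX (hf i))).2
  have hfree : s + 1 ≤ #(insert a Y \ univ.biUnion f) := by
    have hU : #(univ.biUnion f) ≤ (s + 1) * k := card_biUnion_le.trans (by simp [hfk])
    have := le_card_sdiff (univ.biUnion f) (insert a Y)
    lia
  obtain ⟨V, hVX, hVcard⟩ := exists_subset_card_eq hfree
  let g (i : Fin (s + 1)) : α := (V.equivFinOfCardEq hVcard).symm i
  have hg : Injective g := Subtype.val_injective.comp (Equiv.injective _)
  have hgX (i) : g i ∈ insert a Y \ univ.biUnion f := hVX (coe_mem _)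
  have hgf (i j) : g i ∉ f j := fun h =>
    (mem_sdiff.1 (hgX i)).2 (mem_biUnion.2 ⟨j, mem_univ _, h⟩)
  refine hν (fun i => insert (g i) (f i)) (fun i => ?_) fun i j hij => ?_
  · obtain ⟨hfi, hafi⟩ := mem_memberSubfamily.1 (hf i)
    obtain hga | hgY := mem_insert.1 (mem_sdiff.1 (hgX i)).1
    · rwa [hga]
    · have hshift := hF _ hfi (g i) (mem_insert_of_mem hgY) a (mem_insert_self _ _) (haY _ hgY)
        (mem_insert_self _ _) (by simp [hgf, (haY _ hgY).ne])
      rwa [erase_insert hafi] at hshift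
  · have : Disjoint (f i) (f j) := hdisj hij
    simpa [onFun, hgf, hg.ne hij, (hg.ne hij).symm]

theorem IsShiftedOn.card_le_mul_card_shadow (hF : IsShiftedOn X F) (hFX : F ⊆ powersetCard k X)
    (hν : CrossDependent fun _ : Fin (s + 1) => F) : #F ≤ s * #(∂ F) := by
  induction X using induction_on_max generalizing k F with
  | empty =>
    obtain _ | k := k
    · simp [hν.eq_empty_of_subset_powersetCard_zero hFX]
    · exact card_le_mul_card_shadow_of_card_lt hFX (by simp)
  | insert a Y haY ih =>
    obtain _ | k := k
    · simp [hν.eq_empty_of_subset_powersetCard_zero hFX]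
    obtain hX | hX := lt_or_ge #(insert a Y) ((s + 1) * (k + 1))
    · exact card_le_mul_card_shadow_of_card_lt hFX hX
    have ha : a ∉ Y := fun h => (haY a h).false
    calc #F = #(F.memberSubfamily a) + #(F.nonMemberSubfamily a) :=
          (card_memberSubfamily_add_card_nonMemberSubfamily a F).symm
      _ ≤ s * #(∂ (F.memberSubfamily a)) + s * #(∂ (F.nonMemberSubfamily a)) :=
          add_le_add
            (ih (hF.memberSubfamily ha (subset_insert a Y))
              (memberSubfamily_subset_powersetCard hFX) (hν.memberSubfamily hF hFX haY hX))
            (ih (hF.nonMemberSubfamily ha) (nonMemberSubfamily_subset_powersetCard hFX)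
              fun f hf => hν f fun i => (mem_nonMemberSubfamily.1 (hf i)).1)
      _ ≤ s * #((∂ F).memberSubfamily a) + s * #((∂ F).nonMemberSubfamily a) := by
          gcongr
          exacts [shadow_memberSubfamily_subset, shadow_nonMemberSubfamily_subset]
      _ = s * #(∂ F) := by
          rw [← mul_add, card_memberSubfamily_add_card_nonMemberSubfamily]

end Shifted

section Compression

variable {α ι : Type*} [DecidableEq α] {F : Finset (Finset α)} {A : Finset α} {x y : α}

theorem compress_singleton_of_mem (hy : y ∈ A) (hx : x ∉ A) :
    UV.compress {x} {y} A = insert x (A.erase y) := by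
  rw [UV.compress_of_disjoint_of_le (disjoint_singleton_left.2 hx) (singleton_subset_iff.2 hy)]
  grind

theorem compress_singleton_cases (x y : α) (A : Finset α) :
    UV.compress {x} {y} A = A ∨
      y ∈ A ∧ x ∉ A ∧ UV.compress {x} {y} A = insert x (A.erase y) := by
  by_cases h : y ∈ A ∧ x ∉ A
  · exact .inr ⟨h.1, h.2, compress_singleton_of_mem h.1 h.2⟩
  · exact .inl (if_neg fun h' => h ⟨singleton_subset_iff.1 h'.2, disjoint_singleton_left.1 h'.1⟩)

theorem insert_erase_mem_of_isCompressed (hF : UV.IsCompressed {x} {y} F) (hA : A ∈ F)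
    (hy : y ∈ A) (hx : x ∉ A) : insert x (A.erase y) ∈ F := by
  rw [← compress_singleton_of_mem hy hx, ← hF.eq]
  exact UV.compress_mem_compression hA

theorem uvCompression_subset_powersetCard {X : Finset α} {k : ℕ} (hx : x ∈ X)
    (hF : F ⊆ powersetCard k X) : 𝓒 {x} {y} F ⊆ powersetCard k X := fun A hA => by
  obtain ⟨hA, -⟩ | ⟨-, B, hB, rfl⟩ := UV.mem_compression.1 hA
  · exact hF hA
  · obtain ⟨hBX, hBk⟩ := mem_powersetCard.1 (hF hB)
    refine mem_powersetCard.2 ⟨?_, (UV.card_compress (u := {x}) (v := {y}) rfl B).trans hBk⟩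
    grind [compress_singleton_cases x y B]

/-- If one of the disjoint representatives of the compressed families is new, then it contains `x`,
no other one does, and exchanging `x` and `y` in all of them yields representatives of the original
families. -/
theorem CrossDependent.uvCompression {F : ι → Finset (Finset α)} (hF : CrossDependent F)
    (x y : α) : CrossDependent fun i => 𝓒 {x} {y} (F i) := fun f hf hdisj => by
  obtain ⟨i₀, hi₀⟩ : ∃ i, f i ∉ F i := by
    by_contra! hall
    exact hF f hall hdisj
  let swap (A : Finset α) : Finset α := A.map (Equiv.swap x y).toEmbedding
  have mem_swap {z : α} {A : Finset α} : z ∈ swap A ↔ Equiv.swap x y z ∈ A := by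
    simp [swap, mem_map_equiv]
  have hnew {i} (hi : f i ∉ F i) : x ∈ f i ∧ swap (f i) ∈ F i := by
    have hx : x ∈ f i := singleton_subset_iff.1 (UV.le_of_mem_compression_of_notMem (hf i) hi)
    have hy : y ∉ f i :=
      disjoint_singleton_left.1 (UV.disjoint_of_mem_compression_of_notMem (hf i) hi)
    refine ⟨hx, ?_⟩
    convert UV.sup_sdiff_mem_of_mem_compression_of_notMem (hf i) hi using 1
    ext z
    rw [mem_swap, Equiv.swap_apply_def]
    grind
  refine hF (fun i => swap (f i)) (fun i => ?_) fun i j hij => (disjoint_map _).2 (hdisj hij)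
  obtain rfl | hne := eq_or_ne i i₀
  · exact (hnew hi₀).2
  have hx : x ∉ f i := fun h => disjoint_left.1 (hdisj hne) h (hnew hi₀).1
  by_cases hy : y ∈ f i
  · convert UV.sup_sdiff_mem_of_mem_compression (hf i) (singleton_subset_iff.2 hy)
      (disjoint_singleton_left.2 hx) using 1
    ext z
    rw [mem_swap, Equiv.swap_apply_def]
    grind
  · have hswap : swap (f i) = f i := by
      ext z
      rw [mem_swap, Equiv.swap_apply_def]
      grind
    rw [hswap]
    by_contra hi
    exact hx (hnew hi).1

end Compression

section WeightMinimal

theorem sum_uvCompression_lt {β M : Type*} [GeneralizedBooleanAlgebra β]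
    [DecidableRel (Disjoint : β → β → Prop)] [DecidableLE β] [DecidableEq β]
    [AddCommMonoid M] [PartialOrder M] [IsOrderedCancelAddMonoid M] {u v : β} {F : Finset β}
    {w : β → M} (hw : ∀ a ∈ F, UV.compress u v a ∉ F → w (UV.compress u v a) < w a)
    (hF : ¬UV.IsCompressed u v F) : ∑ a ∈ 𝓒 u v F, w a < ∑ a ∈ F, w a := by
  have hne : {a ∈ F | UV.compress u v a ∉ F}.Nonempty := by
    by_contra hempty
    rw [not_nonempty_iff_eq_empty, filter_eq_empty_iff] at hempty
    exact hF (by grind [UV.IsCompressed, UV.mem_compression])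
  calc ∑ a ∈ 𝓒 u v F, w a
      = ∑ a ∈ F with UV.compress u v a ∈ F, w a +
          ∑ a ∈ F with UV.compress u v a ∉ F, w (UV.compress u v a) := by
        rw [UV.compression, sum_union UV.compress_disjoint, filter_image,
          sum_image UV.compress_injOn]
    _ < ∑ a ∈ F with UV.compress u v a ∈ F, w a + ∑ a ∈ F with UV.compress u v a ∉ F, w a := by
        gcongr with a ha
        exact hw a (mem_filter.1 ha).1 (mem_filter.1 ha).2
    _ = ∑ a ∈ F, w a := sum_filter_add_sum_filter_not F _ w

variable {α : Type*} [LinearOrder α] {X A : Finset α} {x y : α}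

/-- The sum of the positions in `X` of the elements of `A`, which decreases when elements are
replaced by smaller elements of `X`. -/
def weight (X A : Finset α) : ℕ :=
  ∑ a ∈ A, #{b ∈ X | b < a}

theorem weight_insert_erase_lt (hxX : x ∈ X) (hxy : x < y) (hy : y ∈ A) (hx : x ∉ A) :
    weight X (insert x (A.erase y)) < weight X A := by
  have hlt : #{b ∈ X | b < x} < #{b ∈ X | b < y} :=
    card_lt_card ⟨monotone_filter_right X fun b _ hb => hb.trans hxy,
      fun h => (mem_filter.1 (h (mem_filter.2 ⟨hxX, hxy⟩))).2.false⟩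
  rw [weight, weight, sum_insert (by simp [hx]), ← add_sum_erase A _ hy]
  gcongr

theorem exists_forall_isCompressed (X : Finset α) (C : Finset (Finset α) → Prop)
    {G : Finset (Finset α)} (hG : C G) :
    ∃ H, C H ∧ ∀ x ∈ X, ∀ y, x < y → C (𝓒 {x} {y} H) → UV.IsCompressed {x} {y} H := by
  obtain ⟨H, hH, hmin⟩ :=
    exists_minimalFor_of_wellFoundedLT C (fun H => ∑ A ∈ H, weight X A) ⟨G, hG⟩
  refine ⟨H, hH, fun x hxX y hxy hC => ?_⟩
  by_contra hcomp
  have hlt : ∑ A ∈ 𝓒 {x} {y} H, weight X A < ∑ A ∈ H, weight X A := by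
    refine sum_uvCompression_lt (fun A hA hAx => ?_) hcomp
    obtain heq | ⟨hy, hx, heq⟩ := compress_singleton_cases x y A
    · rw [heq] at hAx
      contradiction
    · rw [heq]
      exact weight_insert_erase_lt hxX hxy hy hx
  exact (hmin hC hlt.le).not_gt hlt

end WeightMinimal

section InitialSegment

variable {α : Type*} [LinearOrder α] {F : Finset (Finset α)} {X B : Finset α} {l : ℕ}

theorem exists_mem_powersetCard_forall_lt (hl : l ≤ #X) :
    ∃ B ∈ powersetCard l X, ∀ x ∈ B, ∀ y ∈ X, y ∉ B → x < y := by
  induction X using induction_on_max with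
  | empty => exact ⟨∅, by simpa [eq_comm] using hl, by simp⟩
  | insert a Y haY ih =>
    have ha : a ∉ Y := fun h => (haY a h).false
    rw [card_insert_of_notMem ha] at hl
    obtain hlY | hlY := hl.lt_or_eq
    · obtain ⟨B, hB, hBY⟩ := ih (Nat.le_of_lt_succ hlY)
      refine ⟨B, powersetCard_mono (subset_insert a Y) hB, fun x hx y hy hyB => ?_⟩
      obtain rfl | hyY := mem_insert.1 hy
      · exact haY x ((mem_powersetCard.1 hB).1 hx)
      · exact hBY x hx y hyY hyB
    · exact ⟨insert a Y, by simp [hlY, card_insert_of_notMem ha], by grind⟩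

theorem IsShiftedOn.mem_of_forall_lt (hF : IsShiftedOn X F) (hFX : F ⊆ powersetCard l X)
    (hne : F.Nonempty) (hB : B ∈ powersetCard l X) (hBX : ∀ x ∈ B, ∀ y ∈ X, y ∉ B → x < y) :
    B ∈ F := by
  obtain ⟨A, hA, hmin⟩ := exists_min_image F (fun A => #(A \ B)) hne
  obtain ⟨hAX, hAl⟩ := mem_powersetCard.1 (hFX hA)
  obtain ⟨hB, hBl⟩ := mem_powersetCard.1 hB
  have hAB : A ⊆ B := by
    by_contra hAB
    obtain ⟨y, hyA, hyB⟩ := not_subset.1 hAB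
    obtain ⟨x, hxB, hxA⟩ := not_subset.1 fun h => hAB (eq_of_subset_of_card_le h (by lia)).ge
    have hshift := hF A hA x (hB hxB) y (hAX hyA) (hBX x hxB y (hAX hyA) hyB) hyA hxA
    refine (hmin _ hshift).not_gt (card_lt_card ⟨by grind, fun h => ?_⟩)
    have := h (mem_sdiff.2 ⟨hyA, hyB⟩)
    grind
  rwa [← eq_of_subset_of_card_le hAB (by lia)]

end InitialSegment

theorem CrossDependent.card_le_mul_card_shadow {α : Type*} [DecidableEq α] {F : Finset (Finset α)}
    {k s : ℕ} (hF : (F : Set (Finset α)).Sized k)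
    (hν : CrossDependent fun _ : Fin (s + 1) => F) : #F ≤ s * #(∂ F) := by
  obtain ⟨o, -⟩ := exists_wellFoundedLT α
  obtain rfl : ‹DecidableEq α› = o.toDecidableEq := Subsingleton.elim _ _
  let X : Finset α := F.biUnion id
  obtain ⟨H, ⟨hHF, hHX, hHν, hHshadow⟩, hH⟩ := exists_forall_isCompressed X
    (fun H => #H = #F ∧ H ⊆ powersetCard k X ∧
      (CrossDependent fun _ : Fin (s + 1) => H) ∧ #(∂ H) ≤ #(∂ F))
    ⟨rfl, fun A hA => mem_powersetCard.2 ⟨subset_biUnion_of_mem id hA, hF hA⟩, hν, le_rfl⟩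
  have hshift : IsShiftedOn X H := fun A hA x hxX y _ hxy hy hx => by
    refine insert_erase_mem_of_isCompressed (hH x hxX y hxy ⟨?_, ?_, ?_, ?_⟩) hA hy hx
    · rw [UV.card_compression, hHF]
    · exact uvCompression_subset_powersetCard hxX hHX
    · exact hHν.uvCompression x y
    · refine (UV.card_shadow_compression_le _ _ fun z hz => ⟨y, mem_singleton_self y, ?_⟩).trans
        hHshadow
      rw [mem_singleton.1 hz, erase_singleton, erase_singleton]
      exact UV.isCompressed_self ∅ H
  calc #F = #H := hHF.symm
    _ ≤ s * #(∂ H) := hshift.card_le_mul_card_shadow hHX hHν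
    _ ≤ s * #(∂ F) := by gcongr

section OuterLink

variable {α : Type*} [DecidableEq α] {G : Finset (Finset α)} {T : Finset α} {i : α} {l s : ℕ}

/-- The sets `A` disjoint from `T`, not containing `i`, such that `insert i A` is a member of `G`.
For `i ∈ T` they encode the members of `G` whose trace on `T` is `{i}`. -/
def outerLink (G : Finset (Finset α)) (T : Finset α) (i : α) : Finset (Finset α) :=
  {A ∈ G.memberSubfamily i | Disjoint A T}

theorem mem_outerLink {A : Finset α} (hi : i ∈ T) :
    A ∈ outerLink G T i ↔ insert i A ∈ G ∧ Disjoint A T := by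
  rw [outerLink, mem_filter, mem_memberSubfamily, and_assoc, and_congr_right_iff]
  exact fun _ => and_iff_right_of_imp fun h hiA => disjoint_left.1 h hiA hi

theorem card_outerLink (hi : i ∈ T) : #(outerLink G T i) = #{A ∈ G | A ∩ T = {i}} := by
  refine card_nbij' (insert i) (·.erase i) (fun A hA => ?_) (fun A hA => ?_) (fun A hA => ?_)
    fun A hA => ?_
  · obtain ⟨hAG, hAT⟩ := (mem_outerLink hi).1 hA
    exact mem_filter.2 ⟨hAG, by
      rw [insert_inter_of_mem hi, disjoint_iff_inter_eq_empty.1 hAT, insert_empty_eq]⟩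
  · obtain ⟨hAG, hAT⟩ := mem_filter.1 hA
    have hiA : i ∈ A := (mem_inter.1 (hAT ▸ mem_singleton_self i)).1
    refine (mem_outerLink hi).2 ⟨by rwa [insert_erase hiA], ?_⟩
    rw [disjoint_iff_inter_eq_empty, erase_inter, hAT, erase_singleton]
  · exact erase_insert fun hiA => disjoint_left.1 ((mem_outerLink hi).1 hA).2 hiA hi
  · exact insert_erase (mem_inter.1 ((mem_filter.1 hA).2 ▸ mem_singleton_self i)).1

theorem card_filter_card_inter_le_one (G : Finset (Finset α)) (T : Finset α) :
    #{A ∈ G | #(A ∩ T) ≤ 1} = #{A ∈ G | Disjoint A T} + ∑ i ∈ T, #(outerLink G T i) := by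
  have hmem {A : Finset α} : #(A ∩ T) ≤ 1 ↔ A ∩ T ∈ insert ∅ (T.image singleton) := by
    rw [Nat.le_one_iff_eq_zero_or_eq_one, card_eq_zero, card_eq_one, mem_insert, mem_image]
    refine or_congr_right ⟨fun ⟨i, hi⟩ => ⟨i, ?_, hi.symm⟩, fun ⟨i, _, hi⟩ => ⟨i, hi.symm⟩⟩
    exact (mem_inter.1 (hi ▸ mem_singleton_self i)).2
  have hfiber {B : Finset α} (hB : B ∈ insert ∅ (T.image singleton)) :
      {A ∈ {A ∈ G | #(A ∩ T) ≤ 1} | A ∩ T = B} = {A ∈ G | A ∩ T = B} := by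
    rw [filter_filter]
    exact filter_congr fun A _ => and_iff_right_of_imp fun h => hmem.2 (h ▸ hB)
  rw [card_eq_sum_card_fiberwise fun A hA => hmem.1 (mem_filter.1 hA).2,
    sum_congr rfl fun B hB => by rw [hfiber hB], sum_insert (by simp), sum_image (by simp)]
  simp only [disjoint_iff_inter_eq_empty]
  exact congrArg _ (sum_congr rfl fun i hi => (card_outerLink hi).symm)

theorem crossDependent_outerLink (hν : CrossDependent fun _ : Fin (s + 1) => G)
    (hT : #T = s + 1) : CrossDependent fun i : T => outerLink G T i := fun f hf hdisj => by
  have hf (i : T) : insert (i : α) (f i) ∈ G ∧ Disjoint (f i) T := (mem_outerLink i.2).1 (hf i)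
  let e : Fin (s + 1) ≃ T := (T.equivFinOfCardEq hT).symm
  refine hν (fun t => insert (e t : α) (f (e t))) (fun t => (hf (e t)).1) fun t t' ht => ?_
  have hne : e t ≠ e t' := e.injective.ne ht
  have hnotMem (j j' : T) : (j : α) ∉ f j' := fun h => disjoint_left.1 (hf j').2 h j.2
  have : Disjoint (f (e t)) (f (e t')) := hdisj hne
  simpa [onFun, hnotMem, Subtype.val_injective.ne hne, Subtype.val_injective.ne hne.symm]

variable [Fintype α]

theorem outerLink_subset_powersetCard (hG : G ⊆ powersetCard (l + 1) univ) (hi : i ∈ T) :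
    outerLink G T i ⊆ powersetCard l Tᶜ := fun A hA => by
  obtain ⟨hAG, hAT⟩ := (mem_outerLink hi).1 hA
  have hiA : i ∉ A := fun h => disjoint_left.1 hAT h hi
  exact mem_powersetCard.2 ⟨subset_compl_iff_disjoint_right.2 hAT,
    Nat.succ_injective ((card_insert_of_notMem hiA).symm.trans (mem_powersetCard.1 (hG hAG)).2)⟩

theorem card_outerLink_powersetCard (hi : i ∈ T) :
    #(outerLink (powersetCard (l + 1) univ) T i) = (#Tᶜ).choose l := by
  rw [← card_powersetCard]
  refine congrArg card ((outerLink_subset_powersetCard Subset.rfl hi).antisymm fun A hA => ?_)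
  obtain ⟨hAT, hAl⟩ := mem_powersetCard.1 hA
  have hAT := subset_compl_iff_disjoint_right.1 hAT
  have hiA : i ∉ A := fun h => disjoint_left.1 hAT h hi
  exact (mem_outerLink hi).2 ⟨by simp [card_insert_of_notMem hiA, hAl], hAT⟩

theorem card_filter_card_inter_le_one_powersetCard (T : Finset α) (l : ℕ) :
    #{A ∈ powersetCard (l + 1) univ | #(A ∩ T) ≤ 1} =
      (#Tᶜ).choose (l + 1) + #T * (#Tᶜ).choose l := by
  have hdisj : ({A ∈ powersetCard (l + 1) univ | Disjoint A T} : Finset (Finset α)) =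
      powersetCard (l + 1) Tᶜ := by
    ext A
    simp [mem_powersetCard, subset_compl_iff_disjoint_right, and_comm]
  rw [card_filter_card_inter_le_one, hdisj, card_powersetCard,
    sum_congr rfl fun i hi => card_outerLink_powersetCard hi, sum_const, smul_eq_mul]

theorem card_add_choose_le (hG : G ⊆ powersetCard (l + 1) univ) (T : Finset α) :
    #G + ((#Tᶜ).choose (l + 1) + #T * (#Tᶜ).choose l) ≤
      (Fintype.card α).choose (l + 1) +
        (#{A ∈ G | Disjoint A T} + ∑ i ∈ T, #(outerLink G T i)) := by
  rw [← card_filter_card_inter_le_one_powersetCard, ← card_filter_card_inter_le_one,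
    ← card_univ, ← card_powersetCard,
    ← card_filter_add_card_filter_not (s := G) (fun A => #(A ∩ T) ≤ 1),
    ← card_filter_add_card_filter_not (s := powersetCard (l + 1) univ) (fun A => #(A ∩ T) ≤ 1)]
  have := card_le_card (filter_subset_filter (fun A => ¬#(A ∩ T) ≤ 1) hG)
  lia

theorem shadow_filter_disjoint_subset (hG : G ⊆ powersetCard (l + 1) univ)
    (hGT : ∀ A ∈ G, Disjoint A T → ∀ a ∈ A, ∀ i ∈ T, insert i (A.erase a) ∈ G) :
    ∂ {A ∈ G | Disjoint A T} ⊆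
      {A ∈ powersetCard l Tᶜ | ∀ i : T, A ∈ outerLink G T i} := fun B hB => by
  obtain ⟨A, hA, a, ha, rfl⟩ := mem_shadow_iff.1 hB
  obtain ⟨hAG, hAT⟩ := mem_filter.1 hA
  have hBT : Disjoint (A.erase a) T := hAT.mono_left (erase_subset a A)
  refine mem_filter.2 ⟨mem_powersetCard.2 ⟨subset_compl_iff_disjoint_right.2 hBT, ?_⟩,
    fun i => (mem_outerLink i.2).2 ⟨hGT A hAG hAT a ha i i.2, hBT⟩⟩
  rw [card_erase_of_mem ha, (mem_powersetCard.1 (hG hAG)).2, Nat.add_sub_cancel]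

end OuterLink

section ShiftedOutside

variable {α : Type*} [Fintype α] [LinearOrder α] {G : Finset (Finset α)} {T : Finset α}
  {i : α} {l s d : ℕ}

theorem isShiftedOn_outerLink (hG : IsShiftedOn Tᶜ G) (hi : i ∈ T) :
    IsShiftedOn Tᶜ (outerLink G T i) := fun A hA x hx y hy hxy hyA hxA => by
  obtain ⟨hAi, hAT⟩ := mem_filter.1 hA
  refine mem_filter.2 ⟨hG.memberSubfamily (by simpa using hi) Subset.rfl A hAi x hx y hy hxy hyA
    hxA, ?_⟩
  exact disjoint_insert_left.2 ⟨mem_compl.1 hx, hAT.mono_left (erase_subset y A)⟩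

theorem IsShiftedOn.exists_forall_mem_outerLink (hG : IsShiftedOn Tᶜ G)
    (hGl : G ⊆ powersetCard (l + 1) univ) (hl : l ≤ #Tᶜ) (hT : ∀ i ∈ T, ∃ A ∈ G, A ∩ T = {i}) :
    ∃ B, ∀ i : T, B ∈ outerLink G T i := by
  obtain ⟨B, hB, hBT⟩ := exists_mem_powersetCard_forall_lt hl
  refine ⟨B, fun i => (isShiftedOn_outerLink hG i.2).mem_of_forall_lt
    (outerLink_subset_powersetCard hGl i.2) ?_ hB hBT⟩
  obtain ⟨A, hA, hAT⟩ := hT i i.2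
  rw [← card_pos, card_outerLink i.2]
  exact card_pos.2 ⟨A, mem_filter.2 ⟨hA, hAT⟩⟩

theorem IsShiftedOn.mul_card_add_le (hG : IsShiftedOn Tᶜ G) (hT : #T = s + 1)
    (hTc : #Tᶜ = (2 * s + 1 + d) * l) (hGl : G ⊆ powersetCard (l + 1) univ)
    (hν : CrossDependent fun _ : Fin (s + 1) => G) (htrace : ∀ i ∈ T, ∃ A ∈ G, A ∩ T = {i})
    (hGT : ∀ A ∈ G, Disjoint A T → ∀ a ∈ A, ∀ i ∈ T, insert i (A.erase a) ∈ G) :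
    (s + 1 + d) * (#G + (#Tᶜ + 1).choose (l + 1)) + d * ((2 * s + d) * l).choose l ≤
      (s + 1 + d) * (Fintype.card α).choose (l + 1) := by
  obtain ⟨B, hB⟩ := hG.exists_forall_mem_outerLink hGl (by rw [hTc]; nlinarith) htrace
  have hlinks := (crossDependent_outerLink hν hT).mul_sum_card_add_le (by simpa using hT) hTc
    (fun i => outerLink_subset_powersetCard hGl i.2) hB
  have hdisjoint : #{A ∈ G | Disjoint A T} ≤
      s * #{A ∈ powersetCard l Tᶜ | ∀ i : T, A ∈ outerLink G T i} :=
    calc #{A ∈ G | Disjoint A T}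
        ≤ s * #(∂ {A ∈ G | Disjoint A T}) :=
          CrossDependent.card_le_mul_card_shadow
            (fun A hA => (mem_powersetCard.1 (hGl (mem_filter.1 hA).1)).2)
            fun f hf => hν f fun t => (mem_filter.1 (hf t)).1
      _ ≤ _ := by
          gcongr
          exact shadow_filter_disjoint_subset hGl hGT
  have htotal := card_add_choose_le hGl T
  rw [← sum_coe_sort T fun i => #(outerLink G T i), hT] at htotal
  rw [Nat.choose_succ_succ]
  linear_combination (s + 1 + d) * (htotal + hdisjoint) + hlinks

end ShiftedOutside

section Cover

variable {α : Type*} {G : Finset (Finset α)} {S T : Finset α} {x y : α} {l s d : ℕ}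

/-- `S` is a cover of `G`: it meets every member. The covering number is the least size of a
cover. -/
def IsCover (S : Finset α) (G : Finset (Finset α)) : Prop :=
  ∀ A ∈ G, ¬Disjoint S A

theorem IsCover.insert_of_uvCompression [DecidableEq α] (hS : IsCover S (𝓒 {x} {y} G)) :
    IsCover (insert y S) G := fun A hA => by
  by_cases hy : y ∈ A
  · exact not_disjoint_iff.2 ⟨y, mem_insert_self y S, hy⟩
  · have hcompress : UV.compress {x} {y} A = A :=
      (compress_singleton_cases x y A).resolve_right fun h => hy h.1
    have hSA := hS _ (UV.compress_mem_compression hA)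
    rw [hcompress] at hSA
    exact fun h => hSA (h.mono_left (subset_insert y S))

theorem IsCover.exists_inter_eq_singleton [DecidableEq α] (hT : IsCover T G)
    (hmin : ∀ S, IsCover S G → #T ≤ #S) {i : α} (hi : i ∈ T) : ∃ A ∈ G, A ∩ T = {i} := by
  have herase : ¬IsCover (T.erase i) G := fun h => (hmin _ h).not_gt (card_erase_lt_of_mem hi)
  simp only [IsCover, not_forall, not_not] at herase
  obtain ⟨A, hA, hdisj⟩ := herase
  have hTA := hT A hA
  refine ⟨A, hA, ?_⟩
  rw [disjoint_iff_inter_eq_empty, erase_inter, erase_eq_empty_iff] at hdisj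
  rw [inter_comm]
  exact hdisj.resolve_left (disjoint_iff_inter_eq_empty.not.1 hTA)

theorem image_inter_uvCompression [DecidableEq α] (hx : x ∉ T) (hy : y ∉ T) :
    (𝓒 {x} {y} G).image (· ∩ T) = G.image (· ∩ T) := by
  have hcompress (A : Finset α) : UV.compress {x} {y} A ∩ T = A ∩ T := by
    grind [compress_singleton_cases x y A]
  ext B
  simp only [mem_image, UV.mem_compression]
  grind

variable [Fintype α]

theorem IsCover.mul_card_add_le (hT : IsCover T G) (hmin : ∀ S, IsCover S G → #T ≤ #S)
    (hTs : #T = s + 1) (hα : Fintype.card α = (2 * s + 1 + d) * l + (s + 1))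
    (hGl : G ⊆ powersetCard (l + 1) univ) (hν : CrossDependent fun _ : Fin (s + 1) => G) :
    (s + 1 + d) * (#G + ((2 * s + 1 + d) * l + 1).choose (l + 1)) +
        d * ((2 * s + d) * l).choose l ≤ (s + 1 + d) * (Fintype.card α).choose (l + 1) := by
  obtain ⟨_, -⟩ := exists_wellFoundedLT α
  have hTc : #Tᶜ = (2 * s + 1 + d) * l := by rw [card_compl, hα, hTs, Nat.add_sub_cancel]
  obtain ⟨H, ⟨hHG, hHl, hHν, hHT⟩, hH⟩ := exists_forall_isCompressed Tᶜ
    (fun H => #H = #G ∧ H ⊆ powersetCard (l + 1) univ ∧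
      (CrossDependent fun _ : Fin (s + 1) => H) ∧ H.image (· ∩ T) = G.image (· ∩ T))
    ⟨rfl, hGl, hν, rfl⟩
  have hshift : IsShiftedOn Tᶜ H := fun A hA x hx y hy hxy hyA hxA =>
    insert_erase_mem_of_isCompressed (hH x hx y hxy ⟨(UV.card_compression _ _ H).trans hHG,
      uvCompression_subset_powersetCard (mem_univ x) hHl, hHν.uvCompression x y,
      (image_inter_uvCompression (mem_compl.1 hx) (mem_compl.1 hy)).trans hHT⟩) hA hyA hxA
  have htrace (i) (hi : i ∈ T) : ∃ A ∈ H, A ∩ T = {i} := by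
    rw [← mem_image, hHT, mem_image]
    exact hT.exists_inter_eq_singleton hmin hi
  have hcover (A) (hA : A ∈ H) : ¬Disjoint A T := fun hdisj => by
    obtain ⟨B, hB, hBA⟩ := mem_image.1 (hHT ▸ mem_image_of_mem (· ∩ T) hA)
    rw [disjoint_iff_inter_eq_empty.1 hdisj] at hBA
    exact hT B hB (disjoint_iff_inter_eq_empty.2 hBA).symm
  rw [← hHG, ← hTc]
  exact hshift.mul_card_add_le hTs hTc hHl hHν htrace
    fun A hA hdisj => absurd hdisj (hcover A hA)

theorem IsShiftedOn.mul_card_add_le_of_forall_isCover [LinearOrder α] (hG : IsShiftedOn univ G)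
    (hτ : ∀ S, IsCover S G → s + 1 < #S)
    (hα : Fintype.card α = (2 * s + 1 + d) * l + (s + 1))
    (hGl : G ⊆ powersetCard (l + 1) univ) (hν : CrossDependent fun _ : Fin (s + 1) => G) :
    (s + 1 + d) * (#G + ((2 * s + 1 + d) * l + 1).choose (l + 1)) +
        d * ((2 * s + d) * l).choose l ≤ (s + 1 + d) * (Fintype.card α).choose (l + 1) := by
  obtain ⟨T, hT, hTlt⟩ :=
    exists_mem_powersetCard_forall_lt (X := (univ : Finset α)) (l := s + 1) (by simp [hα])
  obtain ⟨-, hTs⟩ := mem_powersetCard.1 hT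
  have hTc : #Tᶜ = (2 * s + 1 + d) * l := by rw [card_compl, hα, hTs, Nat.add_sub_cancel]
  have hGT (A) (hA : A ∈ G) (hdisj : Disjoint A T) (a) (ha : a ∈ A) (i) (hi : i ∈ T) :
      insert i (A.erase a) ∈ G :=
    hG A hA i (mem_univ i) a (mem_univ a) (hTlt i hi a (mem_univ a) (disjoint_left.1 hdisj ha)) ha
      (disjoint_right.1 hdisj hi)
  have htrace (i) (hi : i ∈ T) : ∃ A ∈ G, A ∩ T = {i} := by
    obtain ⟨A, hA, hdisj⟩ : ∃ A ∈ G, Disjoint A T := by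
      by_contra! h
      exact (hτ T fun A hA hTA => h A hA hTA.symm).ne' hTs
    obtain ⟨a, ha⟩ : A.Nonempty := card_pos.1 (by simp [(mem_powersetCard.1 (hGl hA)).2])
    refine ⟨_, hGT A hA hdisj a ha i hi, ?_⟩
    rw [insert_inter_of_mem hi, erase_inter, disjoint_iff_inter_eq_empty.1 hdisj, erase_empty,
      insert_empty_eq]
  rw [← hTc]
  exact (hG.mono (subset_univ _)).mul_card_add_le hTs hTc hGl hν htrace hGT

theorem CrossDependent.mul_card_add_le (hν : CrossDependent fun _ : Fin (s + 1) => G)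
    (hτ : ∀ S, IsCover S G → s + 1 ≤ #S)
    (hα : Fintype.card α = (2 * s + 1 + d) * l + (s + 1))
    (hGl : G ⊆ powersetCard (l + 1) univ) :
    (s + 1 + d) * (#G + ((2 * s + 1 + d) * l + 1).choose (l + 1)) +
        d * ((2 * s + d) * l).choose l ≤ (s + 1 + d) * (Fintype.card α).choose (l + 1) := by
  obtain ⟨_, -⟩ := exists_wellFoundedLT α
  obtain ⟨H, ⟨hHG, hHl, hHν, hHτ⟩, hH⟩ := exists_forall_isCompressed (univ : Finset α)
    (fun H => #H = #G ∧ H ⊆ powersetCard (l + 1) univ ∧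
      (CrossDependent fun _ : Fin (s + 1) => H) ∧ ∀ S, IsCover S H → s + 1 ≤ #S)
    ⟨rfl, hGl, hν, hτ⟩
  rw [← hHG]
  by_cases hcover : ∃ T, IsCover T H ∧ #T ≤ s + 1
  · obtain ⟨T, hT, hTs⟩ := hcover
    obtain hTs := hTs.antisymm (hHτ T hT)
    exact hT.mul_card_add_le (fun S hS => hTs.trans_le (hHτ S hS)) hTs hα hHl hHν
  push Not at hcover
  refine IsShiftedOn.mul_card_add_le_of_forall_isCover (fun A hA x _ y _ hxy hy hx => ?_) hcover
    hα hHl hHν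
  refine insert_erase_mem_of_isCompressed (hH x (mem_univ x) y hxy
    ⟨(UV.card_compression _ _ H).trans hHG, uvCompression_subset_powersetCard (mem_univ x) hHl,
      hHν.uvCompression x y, fun S hS => ?_⟩) hA hy hx
  have := (hcover _ hS.insert_of_uvCompression).trans_le (card_insert_le y S)
  lia

end Cover

theorem crossDependent_of_card_le {α : Type*} {G : Finset (Finset α)} {s : ℕ} (hG : ∅ ∉ G)
    (hν : ∀ M ⊆ G, (M : Set (Finset α)).PairwiseDisjoint id → #M ≤ s) :
    CrossDependent fun _ : Fin (s + 1) => G := fun f hf hdisj => by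
  have hinj : Injective f := fun i j hij => by
    by_contra hne
    have hself : Disjoint (f i) (f j) := hdisj hne
    rw [← hij, disjoint_self, bot_eq_empty] at hself
    exact hG (hself ▸ hf i)
  have := hν (univ.map ⟨f, hinj⟩) (by simpa [subset_iff] using hf)
    (by
      rw [coe_map, coe_univ, Set.image_univ]
      rintro _ ⟨i, rfl⟩ _ ⟨j, rfl⟩ hij
      exact hdisj fun h => hij (congrArg f h))
  simp at this

theorem FK_stability_general {α : Type*} [Fintype α] {G : Finset (Finset α)} {s k u : ℕ}
    (hk : 1 ≤ k) (hu : s + 1 ≤ u) (hα : Fintype.card α = (u + s - 1) * (k - 1) + s + k)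
    (hG : (G : Set (Finset α)).Sized k)
    (hν : ∀ M ⊆ G, (M : Set (Finset α)).PairwiseDisjoint id → #M ≤ s)
    (hτ : ∀ S, IsCover S G → s + 1 ≤ #S) :
    (#G : ℝ) ≤ (Fintype.card α).choose k - (Fintype.card α - s).choose k -
      ((u : ℝ) - s - 1) / u * (Fintype.card α - s - k).choose (k - 1) := by
  obtain ⟨l, rfl⟩ := Nat.exists_eq_add_of_le' hk
  obtain ⟨d, rfl⟩ := Nat.exists_eq_add_of_le hu
  have hpred : s + 1 + d + s - 1 = 2 * s + d := by lia
  rw [hpred, Nat.add_sub_cancel] at hα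
  have hcard : Fintype.card α = (2 * s + 1 + d) * l + (s + 1) := by rw [hα]; ring
  have hsub : Fintype.card α - s = (2 * s + 1 + d) * l + 1 := by lia
  have hsub' : Fintype.card α - s - (l + 1) = (2 * s + d) * l := by lia
  have hν' : CrossDependent fun _ : Fin (s + 1) => G :=
    crossDependent_of_card_le (fun h => by simpa using hG h) hν
  have hbound := hν'.mul_card_add_le hτ hcard
    fun A hA => mem_powersetCard.2 ⟨subset_univ A, hG hA⟩
  rw [← hsub, ← hsub'] at hbound
  rify at hbound
  rw [Nat.add_sub_cancel]
  have hu0 : (0 : ℝ) < (s + 1 + d : ℕ) := by positivity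
  refine le_of_mul_le_mul_left ?_ hu0
  field_simp
  push_cast
  linarith

/-- Theorem 10 (Frankl–Kupavskii stability theorem): fix integers `s, k ≥ 2` and
`u ≥ s + 1`, and let `n = (u+s-1)(k-1) + s + k`. Then any family `G` of
`k`-subsets of `[n]` with matching number `ν(G) = s` and covering number
`τ(G) ≥ s + 1` satisfies
`|G| ≤ C(n,k) - C(n-s,k) - ((u-s-1)/u)·C(n-s-k, k-1)`. -/
theorem FK_stability (s k u n : ℕ) (hs : 2 ≤ s) (hk : 2 ≤ k) (hu : s + 1 ≤ u)
    (hn : n = (u + s - 1) * (k - 1) + s + k)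
    (G : Finset (Finset (Fin n)))
    (hcard : ∀ A ∈ G, A.card = k)
    (hmatch_le : ∀ M ⊆ G, (∀ A ∈ M, ∀ B ∈ M, A ≠ B → Disjoint A B) → M.card ≤ s)
    (hmatch_eq : ∃ M ⊆ G, (∀ A ∈ M, ∀ B ∈ M, A ≠ B → Disjoint A B) ∧ M.card = s)
    (hcover : ∀ S : Finset (Fin n), (∀ A ∈ G, (S ∩ A).Nonempty) → s + 1 ≤ S.card) :
    (G.card : ℝ) ≤ (n.choose k : ℝ) - ((n - s).choose k : ℝ) -
      ((u : ℝ) - (s : ℝ) - 1) / (u : ℝ) * ((n - s - k).choose (k - 1) : ℝ) := by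
  have := FK_stability_general (by lia) hu (by simpa using hn) (fun A hA => hcard A hA)
    (fun M hM h => hmatch_le M hM fun A hA B hB => h hA hB)
    fun S hS => hcover S fun A hA => not_disjoint_iff_nonempty_inter.1 (hS A hA)
  simpa using this
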